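/- arXiv:1903.11968 — 3 statements merged into one kernel-verified Lean document; each statement's English description precedes it below -/
import Mathlib

section
/- Let 0 ≤ j < j' < 2^n. Then L(E_1(j) + E_1(j')) = 2^n - 2^{ν_2(j' - j)}, where ν_2(m) denotes the largest integer t such that 2^t divides m (the 2-adic valuation). -/
/-- Generating polynomial `S^N(x) = s_0 + s_1 x + ... + s_{N-1} x^{N-1}` of one period
of an `N`-periodic binary sequence. -/
noncomputable def genPoly {N : ℕ} (S : Fin N → ZMod 2) : Polynomial (ZMod 2) :=
  ∑ i : Fin N, Polynomial.C (S i) * Polynomial.X ^ (i : ℕ)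

/-- Linear complexity `L(S) = N - deg (gcd (1 - x^N, S^N(x)))`. -/
noncomputable def linComp {N : ℕ} (S : Fin N → ZMod 2) : ℕ :=
  N - (EuclideanDomain.gcd (1 - Polynomial.X ^ N) (genPoly S)).natDegree

/-- Hamming weight of one period of an `N`-periodic binary sequence. -/
def wt {N : ℕ} (T : Fin N → ZMod 2) : ℕ :=
  (Finset.univ.filter (fun i => T i ≠ 0)).card

/-- `k`-error linear complexity `L_{N,k}(S)`. -/
noncomputable def errLC {N : ℕ} (S : Fin N → ZMod 2) (k : ℕ) : ℕ :=
  sInf {c | ∃ T : Fin N → ZMod 2, wt T ≤ k ∧ linComp (S + T) = c}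

/-- `k`-error linear complexity with a zone of length `Z`: `L_{N,k;Z}(S)`. -/
noncomputable def errLCZone {N : ℕ} (S : Fin N → ZMod 2) (k Z : ℕ) : ℕ :=
  sInf {c | ∃ T : Fin N → ZMod 2, wt T ≤ k ∧ (∀ i : Fin N, Z ≤ (i : ℕ) → T i = 0) ∧
    linComp (S + T) = c}

/-- `E_1(j)`: the sequence whose only nonzero term in one period is a `1` at position `j`. -/
def E1 {N : ℕ} (j : Fin N) : Fin N → ZMod 2 :=
  fun i => if i = j then 1 else 0

open Polynomial in
theorem genPoly_E1_add {N : ℕ} (j j' : Fin N) :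
    genPoly (E1 j + E1 j') = X ^ (j : ℕ) + X ^ (j' : ℕ) := by
  simp [genPoly, E1, add_mul, Finset.sum_add_distrib, apply_ite C, ite_mul]

open Polynomial in
theorem gcd_degree_aux {F : Type*} [Field F] [DecidableEq F] (d P Q : F[X]) (h : IsCoprime P Q) :
    (EuclideanDomain.gcd (d * P) (d * Q)).natDegree = d.natDegree := by
  apply natDegree_eq_of_degree_eq
  apply degree_eq_degree_of_associated
  apply associated_of_dvd_dvd
  · obtain ⟨a, b, hab⟩ := h
    have : d = a * (d * P) + b * (d * Q) := by linear_combination (-d) * hab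
    conv_rhs => rw [this]
    exact dvd_add (Dvd.dvd.mul_left (EuclideanDomain.gcd_dvd_left _ _) _)
      (Dvd.dvd.mul_left (EuclideanDomain.gcd_dvd_right _ _) _)
  · exact EuclideanDomain.dvd_gcd (Dvd.intro _ rfl) (Dvd.intro _ rfl)

open Polynomial in
theorem coprime_aux (j u t : ℕ) (hu : Odd u) :
    IsCoprime (1 - X : (ZMod 2)[X]) (X ^ j * (∑ i ∈ Finset.range u, X ^ i) ^ t) := by
  have h1 : IsCoprime (1 - X : (ZMod 2)[X]) X := ⟨1, 1, by ring⟩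
  have h2 : IsCoprime (1 - X : (ZMod 2)[X]) (∑ i ∈ Finset.range u, X ^ i) := by
    have hd : (X - C 1 : (ZMod 2)[X]) ∣
        (∑ i ∈ Finset.range u, X ^ i) - C ((∑ i ∈ Finset.range u, X ^ i : (ZMod 2)[X]).eval 1) :=
      X_sub_C_dvd_sub_C_eval
    have hu1 : (u : ZMod 2) = 1 := ZMod.natCast_eq_one_iff_odd.mpr hu
    have he : (∑ i ∈ Finset.range u, X ^ i : (ZMod 2)[X]).eval 1 = 1 := by
      simp [eval_finsetSum, hu1]
    rw [he] at hd
    obtain ⟨q, hq⟩ := hd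
    refine ⟨q, 1, ?_⟩
    simp only [C_1] at hq
    linear_combination hq
  exact (h1.pow_right).mul_right h2.pow_right

open Polynomial in
/-- For `0 ≤ j < j' < 2^n`, `L(E_1(j) + E_1(j')) = 2^n - 2^{ν_2(j'-j)}`. -/
theorem stmt3 (n : ℕ) (j j' : Fin (2^n)) (h : (j : ℕ) < (j' : ℕ)) :
    linComp (E1 j + E1 j') = 2^n - 2^(padicValNat 2 ((j' : ℕ) - (j : ℕ))) := by
  have hj' := j'.isLt
  obtain ⟨m, hm⟩ : ∃ m, (j' : ℕ) - j = m := ⟨_, rfl⟩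
  have hm0 : m ≠ 0 := by omega
  have hjj : (j' : ℕ) = j + m := by omega
  rw [linComp, genPoly_E1_add, hm, hjj]
  set t := padicValNat 2 m with ht
  obtain ⟨u, hmu⟩ : 2 ^ t ∣ m := pow_padicValNat_dvd
  have hu : Odd u := by
    by_contra hne
    rw [Nat.not_odd_iff_even] at hne
    obtain ⟨k, hk⟩ := hne
    exact pow_succ_padicValNat_not_dvd (p := 2) hm0 ⟨k, by rw [← ht, pow_succ]; rw [hmu, hk]; ring⟩
  have htn : 2 ^ t ≤ 2 ^ n := by
    have := Nat.le_of_dvd (by omega) (Dvd.intro u hmu.symm)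
    omega
  have e1 : (1 - X ^ (2 ^ n) : (ZMod 2)[X]) = (1 - X) ^ (2 ^ t) * (1 - X) ^ (2 ^ n - 2 ^ t) := by
    rw [← pow_add, Nat.add_sub_cancel' htn, sub_pow_char_pow, one_pow]
  have e2 : (X ^ (j : ℕ) + X ^ ((j : ℕ) + m) : (ZMod 2)[X]) =
      (1 - X) ^ (2 ^ t) * (X ^ (j : ℕ) * (∑ i ∈ Finset.range u, X ^ i) ^ (2 ^ t)) := by
    have hg : (1 - X ^ m : (ZMod 2)[X]) =
        (1 - X) ^ (2 ^ t) * (∑ i ∈ Finset.range u, X ^ i) ^ (2 ^ t) := by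
      rw [← mul_pow, mul_neg_geom_sum, sub_pow_char_pow, one_pow, ← pow_mul, hmu, mul_comm u]
    rw [mul_left_comm, ← hg, pow_add, mul_sub, mul_one, CharTwo.sub_eq_add]
  rw [e1, e2, gcd_degree_aux _ _ _ (coprime_aux _ _ _ hu).pow_left, natDegree_pow]
  have : (1 - X : (ZMod 2)[X]).natDegree = 1 := by
    rw [← C_1, natDegree_sub, natDegree_X_sub_C]
  rw [this, mul_one]
end

section
/- Let S be a 2^n-periodic binary sequence with L(S) = 2^n, and suppose that 2^n - 2^s < L_1(S) < 2^n - 2^{s-1} for some integer s with 1 ≤ s ≤ n. Then the number of positions j ∈ {0, 1, ..., 2^n - 1} such that L(S + E_1(j)) = L_1(S) is exactly 2^{n-s}. -/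
open Polynomial in
theorem aux_pow (n : ℕ) : (1 - X ^ (2^n) : (ZMod 2)[X]) = (X - 1)^(2^n) := by
  have : CharP ((ZMod 2)[X]) 2 := inferInstance
  have : Fact (Nat.Prime 2) := ⟨Nat.prime_two⟩
  rw [sub_pow_char_pow, one_pow, ← neg_sub, CharTwo.neg_eq]

open Polynomial in
theorem aux_prime : Prime (X - 1 : (ZMod 2)[X]) := by
  simpa using prime_X_sub_C (1 : ZMod 2)

open Polynomial in
theorem aux_deg (k : ℕ) : ((X - 1 : (ZMod 2)[X])^k).natDegree = k := by
  have : (X - 1 : (ZMod 2)[X]) = X - C 1 := by simp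
  rw [this, natDegree_pow, natDegree_X_sub_C, mul_one]

open Polynomial in
theorem aux_lin (n k : ℕ) (hk : k ≤ 2^n) (S : Fin (2^n) → ZMod 2) :
    linComp S ≤ 2^n - k ↔ (X - 1 : (ZMod 2)[X])^k ∣ genPoly S := by
  unfold linComp
  rw [aux_pow]
  have hg1 := EuclideanDomain.gcd_dvd_left ((X - 1 : (ZMod 2)[X])^(2^n)) (genPoly S)
  have hg2 := EuclideanDomain.gcd_dvd_right ((X - 1 : (ZMod 2)[X])^(2^n)) (genPoly S)
  have hg3 : (X - 1 : (ZMod 2)[X])^k ∣ genPoly S →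
      (X - 1 : (ZMod 2)[X])^k ∣ EuclideanDomain.gcd ((X - 1 : (ZMod 2)[X])^(2^n)) (genPoly S) :=
    fun h => EuclideanDomain.dvd_gcd (pow_dvd_pow _ hk) h
  generalize EuclideanDomain.gcd ((X - 1 : (ZMod 2)[X])^(2^n)) (genPoly S) = g at *
  obtain ⟨m, hm, ha⟩ := (dvd_prime_pow aux_prime _).1 hg1
  have hd : g.natDegree = m := by
    rw [natDegree_eq_of_degree_eq (degree_eq_degree_of_associated ha), aux_deg]
  rw [hd]
  constructor
  · intro h
    exact ((pow_dvd_pow _ (by omega : k ≤ m)).trans ha.symm.dvd).trans hg2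
  · intro h
    have h' := (hg3 h).trans ha.dvd
    have := (pow_dvd_pow_iff aux_prime.ne_zero aux_prime.not_isUnit).1 h'
    omega

open Polynomial in
theorem aux_val (s d : ℕ) (h : (X - 1 : (ZMod 2)[X])^(2^s+1) ∣ X^d - 1) : 2^(s+1) ∣ d := by
  have : CharP ((ZMod 2)[X]) 2 := inferInstance
  have : Fact (Nat.Prime 2) := ⟨Nat.prime_two⟩
  by_cases hd0 : d = 0
  · simp [hd0]
  obtain ⟨t, u, hu, rfl⟩ := Nat.exists_eq_two_pow_mul_odd hd0
  by_contra hcon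
  have hts : t ≤ s := by
    by_contra hlt
    exact hcon ((pow_dvd_pow 2 (by omega : s + 1 ≤ t)).mul_right _)
  have e : (X ^ (2^t*u) - 1 : (ZMod 2)[X])
      = (X - 1)^(2^t) * (∑ i ∈ Finset.range u, X^i)^(2^t) := by
    rw [← mul_pow, mul_comm (X - 1), geom_sum_mul, sub_pow_char_pow, one_pow, ← pow_mul,
      mul_comm u]
  rw [e] at h
  have h2 := (pow_dvd_pow (X - 1 : (ZMod 2)[X])
    (Nat.succ_le_succ (Nat.pow_le_pow_right (by norm_num : 2 > 0) hts))).trans h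
  rw [Nat.succ_eq_add_one, pow_succ] at h2
  have h3 := (mul_dvd_mul_iff_left (pow_ne_zero _ aux_prime.ne_zero)).1 h2
  have h4 := aux_prime.dvd_of_dvd_pow h3
  obtain ⟨q, hq⟩ := h4
  have h5 := congrArg (eval 1) hq
  simp [eval_finsetSum] at h5
  rw [ZMod.natCast_eq_zero_iff] at h5
  exact (Nat.not_even_iff_odd.2 hu) (even_iff_two_dvd.2 h5)

open Polynomial in
theorem aux_val2 (s v : ℕ) (hv1 : 2^s < v) (hv2 : v ≤ 2^(s+1)) (a b : ℕ) (hab : a ≤ b) :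
    (X - 1 : (ZMod 2)[X])^v ∣ X^b - X^a ↔ a ≡ b [MOD 2^(s+1)] := by
  have : CharP ((ZMod 2)[X]) 2 := inferInstance
  have : Fact (Nat.Prime 2) := ⟨Nat.prime_two⟩
  rw [Nat.modEq_iff_dvd' hab]
  obtain ⟨d, rfl⟩ := Nat.exists_eq_add_of_le hab
  have e : (X^(a+d) - X^a : (ZMod 2)[X]) = X^a * (X^d - 1) := by ring
  rw [e, Nat.add_sub_cancel_left]
  constructor
  · intro h
    apply aux_val
    have hc : IsCoprime ((X - 1 : (ZMod 2)[X])^v) (X^a) := by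
      apply IsCoprime.pow
      exact ⟨-1, 1, by ring⟩
    exact (pow_dvd_pow _ hv1).trans (hc.dvd_of_dvd_mul_left h)
  · rintro ⟨m, rfl⟩
    apply Dvd.dvd.mul_left
    refine (pow_dvd_pow _ hv2).trans ?_
    rw [sub_pow_char_pow, one_pow, pow_mul]
    exact sub_one_dvd_pow_sub_one _ _

open Polynomial in
theorem aux_val3 (s v : ℕ) (hv1 : 2^s < v) (hv2 : v ≤ 2^(s+1)) (a b : ℕ) :
    (X - 1 : (ZMod 2)[X])^v ∣ X^b - X^a ↔ b ≡ a [MOD 2^(s+1)] := by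
  rcases le_total a b with h | h
  · rw [aux_val2 s v hv1 hv2 a b h]
    exact Nat.ModEq.comm
  · rw [← aux_val2 s v hv1 hv2 b a h, dvd_sub_comm]

open Polynomial in
theorem aux_gen {N : ℕ} (S : Fin N → ZMod 2) (j : Fin N) :
    genPoly (S + E1 j) = genPoly S + X^(j : ℕ) := by
  unfold genPoly E1
  simp [add_mul, Finset.sum_add_distrib, ite_mul]

theorem aux_wt {N : ℕ} (T : Fin N → ZMod 2) (h : wt T ≤ 1) : T = 0 ∨ ∃ j, T = E1 j := by
  unfold wt at h
  rcases Nat.le_one_iff_eq_zero_or_eq_one.1 h with h | h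
  · left
    funext i
    by_contra hi
    have : i ∈ Finset.univ.filter (fun i => T i ≠ 0) := by simpa using hi
    rw [Finset.card_eq_zero.1 h] at this
    simp at this
  · right
    obtain ⟨j, hj⟩ := Finset.card_eq_one.1 h
    refine ⟨j, ?_⟩
    funext i
    have hi : i ∈ Finset.univ.filter (fun i => T i ≠ 0) ↔ i = j := by rw [hj]; simp
    simp only [Finset.mem_filter, Finset.mem_univ, true_and] at hi
    unfold E1
    have h2 : ∀ x : ZMod 2, x ≠ 0 → x = 1 := by decide
    split_ifs with hij
    · exact h2 _ (hi.2 hij)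
    · by_contra h0
      exact hij (hi.1 h0)

theorem aux_wtE {N : ℕ} (j : Fin N) : wt (E1 j) ≤ 1 := by
  unfold wt E1
  rw [Finset.card_le_one]
  intro a ha b hb
  simp only [Finset.mem_filter, Finset.mem_univ, true_and, ne_eq, ite_eq_right_iff, one_ne_zero,
    imp_false, not_not] at ha hb
  rw [ha, hb]

theorem dvd_sub_iff_aux {R : Type*} [CommRing R] {a b c : R} (h : a ∣ c) :
    a ∣ b - c ↔ a ∣ b :=
  ⟨fun k => (dvd_iff_dvd_of_dvd_sub k).2 h, fun k => dvd_sub k h⟩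

theorem aux_count (n s a : ℕ) (hsn : s ≤ n) :
    (Finset.univ.filter (fun j : Fin (2^n) => (j : ℕ) ≡ a [MOD 2^s])).card = 2^(n-s) := by
  have h := Nat.count_modEq_card (2^n) (r := 2^s) (by positivity) a
  rw [Nat.mod_eq_zero_of_dvd (pow_dvd_pow 2 hsn), Nat.pow_div hsn (by norm_num)] at h
  simp only [Nat.not_lt_zero, if_false, add_zero] at h
  rw [← h, Nat.count_eq_card_filter_range]
  refine Finset.card_bij (fun j _ => (j : ℕ)) ?_ ?_ ?_
  · intro j hj
    simpa using hj
  · intro i _ j _ hij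
    exact Fin.ext hij
  · intro b hb
    simp only [Finset.mem_filter, Finset.mem_range] at hb
    exact ⟨⟨b, hb.1⟩, by simpa using hb.2, rfl⟩

/-- If `L(S) = 2^n` and `2^n - 2^s < L_1(S) < 2^n - 2^{s-1}`, then exactly `2^{n-s}`
positions `j` satisfy `L(S + E_1(j)) = L_1(S)`. -/
theorem stmt4 (n s : ℕ) (hs1 : 1 ≤ s) (hsn : s ≤ n)
    (S : Fin (2^n) → ZMod 2) (hL : linComp S = 2^n)
    (h1 : 2^n - 2^s < errLC S 1) (h2 : errLC S 1 < 2^n - 2^(s-1)) :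
    (Finset.univ.filter (fun j : Fin (2^n) => linComp (S + E1 j) = errLC S 1)).card
      = 2^(n-s) := by
  have hmem := Nat.sInf_mem (s := {c | ∃ T : Fin (2^n) → ZMod 2, wt T ≤ 1 ∧ linComp (S + T) = c})
    ⟨_, 0, by simp [wt], rfl⟩
  have hmin : ∀ j, errLC S 1 ≤ linComp (S + E1 j) := fun j =>
    Nat.sInf_le ⟨E1 j, aux_wtE j, rfl⟩
  change ∃ T : Fin (2^n) → ZMod 2, wt T ≤ 1 ∧ linComp (S + T) = errLC S 1 at hmem
  obtain ⟨T, hT, hTc⟩ := hmem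
  generalize errLC S 1 = c at *
  obtain ⟨s, rfl⟩ := Nat.exists_eq_add_of_le' hs1
  rw [Nat.add_sub_cancel] at h2
  have hpos : 0 < 2^s := by positivity
  have hle : 2^(s+1) ≤ 2^n := Nat.pow_le_pow_right (by norm_num) hsn
  rcases aux_wt T hT with rfl | ⟨j0, rfl⟩
  · rw [add_zero] at hTc
    omega
  have hc : c = 2^n - (2^n - c) := by omega
  have key : ∀ j, linComp (S + E1 j) = c ↔
      (Polynomial.X - 1 : Polynomial (ZMod 2))^(2^n - c) ∣ genPoly (S + E1 j) := by
    intro j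
    rw [← aux_lin n _ (by omega), ← hc]
    exact ⟨le_of_eq, fun h => le_antisymm h (hmin j)⟩
  have hj0 := (key j0).1 hTc
  rw [← aux_count n (s+1) j0 hsn]
  congr 1
  apply Finset.filter_congr
  intro j _
  rw [key, ← aux_val3 s (2^n - c) (by omega) (by omega), ← (dvd_sub_iff_aux hj0)]
  rw [aux_gen, aux_gen, add_sub_add_left_eq_sub]
end

section
/- Let S be a 2^n-periodic binary sequence and 0 ≤ k ≤ 2^n. Suppose 2^n - 2^s < L_k(S) < 2^n - 2^{s-1} for some integer s with 1 ≤ s ≤ n. Then there exists an integer m with m ≤ k and a 2^n-periodic binary sequence E of Hamming weight m whose support is contained in {0, 1, ..., 2^s - 1}, such that L(S + E) = L_k(S). -/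
open Polynomial in
theorem gcd_natDegree_aux (N M : ℕ) (n s : ℕ) (hN : N = 2^n) (hM : M = 2^s) (hsn : s ≤ n)
    (A B : Polynomial (ZMod 2)) (hAB : (1 - X ^ M : (ZMod 2)[X]) ∣ A - B)
    (hd : (EuclideanDomain.gcd (1 - X ^ N) A).natDegree < M) :
    (EuclideanDomain.gcd (1 - X ^ N) B).natDegree
      = (EuclideanDomain.gcd (1 - X ^ N) A).natDegree := by
  have hMN : M ≤ N := by
    rw [hN, hM]; exact Nat.pow_le_pow_right (by norm_num) hsn
  have hp : ∀ t : ℕ, (1 - X ^ (2^t) : (ZMod 2)[X]) = (X - C 1) ^ (2^t) := by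
    intro t
    have h := sub_pow_char_pow (R := (ZMod 2)[X]) (p := 2) (n := t) X 1
    rw [map_one, h, one_pow, ← neg_sub, CharTwo.neg_eq]
  have hpN : (1 - X ^ N : (ZMod 2)[X]) = (X - C 1) ^ N := by rw [hN]; exact hp n
  have hpM : (1 - X ^ M : (ZMod 2)[X]) = (X - C 1) ^ M := by rw [hM]; exact hp s
  rw [hpM] at hAB
  rw [hpN] at hd ⊢
  have hprime : Prime (X - C 1 : (ZMod 2)[X]) := prime_X_sub_C 1
  have key : ∀ Q : (ZMod 2)[X], ∃ e, Associated (EuclideanDomain.gcd ((X - C 1) ^ N) Q)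
      ((X - C 1) ^ e) ∧ (EuclideanDomain.gcd ((X - C 1) ^ N) Q).natDegree = e := by
    intro Q
    obtain ⟨e, -, he⟩ := (dvd_prime_pow hprime N).1 (EuclideanDomain.gcd_dvd_left ((X - C 1) ^ N) Q)
    refine ⟨e, he, ?_⟩
    rw [natDegree_eq_of_degree_eq (degree_eq_degree_of_associated he)]
    rw [natDegree_pow, natDegree_X_sub_C, mul_one]
  obtain ⟨d, hdA, hd'⟩ := key A
  obtain ⟨e, heB, he'⟩ := key B
  rw [hd'] at hd ⊢
  rw [he']
  have pw : ∀ a b : ℕ, (X - C 1 : (ZMod 2)[X]) ^ a ∣ (X - C 1) ^ b → a ≤ b := fun a b h =>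
    (pow_dvd_pow_iff hprime.ne_zero hprime.not_isUnit).1 h
  have tr : ∀ a, a ≤ M → ((X - C 1 : (ZMod 2)[X]) ^ a ∣ A ↔ (X - C 1 : (ZMod 2)[X]) ^ a ∣ B) := by
    intro a ha
    exact dvd_iff_dvd_of_dvd_sub ((pow_dvd_pow _ ha).trans hAB)
  apply le_antisymm
  · by_contra! hlt
    have hB : (X - C 1 : (ZMod 2)[X]) ^ (d+1) ∣ B :=
      (pow_dvd_pow _ hlt).trans (heB.symm.dvd.trans (EuclideanDomain.gcd_dvd_right _ _))
    have hA := (tr (d+1) hd).2 hB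
    have := EuclideanDomain.dvd_gcd (pow_dvd_pow (X - C 1 : (ZMod 2)[X]) (show d+1 ≤ N by omega)) hA
    have := pw _ _ (this.trans hdA.dvd)
    omega
  · have hA : (X - C 1 : (ZMod 2)[X]) ^ d ∣ A := hdA.symm.dvd.trans (EuclideanDomain.gcd_dvd_right _ _)
    have hB := (tr d hd.le).1 hA
    have := EuclideanDomain.dvd_gcd (pow_dvd_pow (X - C 1 : (ZMod 2)[X]) (show d ≤ N by omega)) hB
    exact pw _ _ (this.trans heB.dvd)

/-- Folding of a sequence modulo `M`. -/
def foldSeq {N : ℕ} (M : ℕ) (T : Fin N → ZMod 2) : Fin N → ZMod 2 :=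
  fun i => ∑ j : Fin N, if (j : ℕ) % M = (i : ℕ) then T j else 0

theorem foldSeq_supp {N M : ℕ} (hM : 0 < M) (T : Fin N → ZMod 2) (i : Fin N)
    (h : foldSeq M T i ≠ 0) : ∃ j : Fin N, T j ≠ 0 ∧ (j : ℕ) % M = i := by
  obtain ⟨j, -, hj⟩ := Finset.exists_ne_zero_of_sum_ne_zero h
  by_cases hji : (j : ℕ) % M = i
  · rw [if_pos hji] at hj
    exact ⟨j, hj, hji⟩
  · rw [if_neg hji] at hj
    exact absurd rfl hj

theorem wt_foldSeq {N M : ℕ} (hM : 0 < M) (T : Fin N → ZMod 2) :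
    wt (foldSeq M T) ≤ wt T := by
  unfold wt
  have : (Finset.univ.filter (fun i => foldSeq M T i ≠ 0)) ⊆
      (Finset.univ.filter (fun i => T i ≠ 0)).image
        (fun j : Fin N => (⟨(j : ℕ) % M, (Nat.mod_le _ _).trans_lt j.2⟩ : Fin N)) := by
    intro i hi
    obtain ⟨j, hj, hji⟩ := foldSeq_supp hM T i (Finset.mem_filter.1 hi).2
    exact Finset.mem_image.2 ⟨j, Finset.mem_filter.2 ⟨Finset.mem_univ _, hj⟩, Fin.ext hji⟩
  exact (Finset.card_le_card this).trans Finset.card_image_le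

theorem genPoly_add {N : ℕ} (S T : Fin N → ZMod 2) :
    genPoly (S + T) = genPoly S + genPoly T := by
  simp [genPoly, add_mul, Finset.sum_add_distrib]

open Polynomial in
theorem genPoly_foldSeq {N M : ℕ} (T : Fin N → ZMod 2) :
    genPoly (foldSeq M T) = ∑ j : Fin N, C (T j) * X ^ ((j : ℕ) % M) := by
  unfold genPoly foldSeq
  simp only [map_sum, Finset.sum_mul]
  rw [Finset.sum_comm]
  refine Finset.sum_congr rfl fun j _ => ?_
  rw [Finset.sum_eq_single (⟨(j : ℕ) % M, (Nat.mod_le _ _).trans_lt j.2⟩ : Fin N)]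
  · simp
  · intro b _ hb
    rw [if_neg]
    · simp
    · intro h
      exact hb (Fin.ext h.symm)
  · simp

open Polynomial in
theorem dvd_genPoly_sub {N M : ℕ} (T : Fin N → ZMod 2) :
    (1 - X ^ M : (ZMod 2)[X]) ∣ genPoly T - genPoly (foldSeq M T) := by
  rw [genPoly_foldSeq]
  unfold genPoly
  rw [← Finset.sum_sub_distrib]
  refine Finset.dvd_sum fun j _ => ?_
  rw [← mul_sub]
  refine Dvd.dvd.mul_left ?_ _
  have h : (X ^ (j : ℕ) : (ZMod 2)[X]) = X ^ ((j : ℕ) % M) * (X ^ M) ^ ((j : ℕ) / M) := by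
    rw [← pow_mul, ← pow_add, Nat.mod_add_div]
  have h2 := sub_dvd_pow_sub_pow (1 : (ZMod 2)[X]) (X ^ M) ((j : ℕ) / M)
  rw [one_pow] at h2
  have h3 : (X ^ (j : ℕ) - X ^ ((j : ℕ) % M) : (ZMod 2)[X])
      = -(X ^ ((j : ℕ) % M)) * (1 - (X ^ M) ^ ((j : ℕ) / M)) := by
    rw [h]; ring
  rw [h3]
  exact h2.mul_left _

/-- If `2^n - 2^s < L_k(S) < 2^n - 2^{s-1}`, then there exists an error vector of
weight `m ≤ k` with support in `[0, 2^s)` reaching `L_k(S)`. -/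
theorem stmt6 (n k s : ℕ) (hk : k ≤ 2^n) (hs1 : 1 ≤ s) (hsn : s ≤ n)
    (S : Fin (2^n) → ZMod 2)
    (h1 : 2^n - 2^s < errLC S k) (h2 : errLC S k < 2^n - 2^(s-1)) :
    ∃ m ≤ k, ∃ E : Fin (2^n) → ZMod 2, wt E = m ∧
      (∀ i : Fin (2^n), E i ≠ 0 → (i : ℕ) < 2^s) ∧
      linComp (S + E) = errLC S k := by
  have hM : 0 < 2^s := by positivity
  obtain ⟨T, hT, hc⟩ : ∃ T : Fin (2^n) → ZMod 2, wt T ≤ k ∧ linComp (S + T) = errLC S k :=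
    Nat.sInf_mem (s := {c | ∃ T : Fin (2^n) → ZMod 2, wt T ≤ k ∧ linComp (S + T) = c})
      ⟨_, 0, by simp [wt], rfl⟩
  refine ⟨_, (wt_foldSeq hM T).trans hT, foldSeq (2^s) T, rfl, ?_, ?_⟩
  · intro i hi
    obtain ⟨j, -, hj⟩ := foldSeq_supp hM T i hi
    rw [← hj]
    exact Nat.mod_lt _ hM
  · rw [← hc] at h1 ⊢
    unfold linComp at h1 ⊢
    rw [gcd_natDegree_aux (2^n) (2^s) n s rfl rfl hsn (genPoly (S + T))]
    · rw [genPoly_add, genPoly_add, add_sub_add_left_eq_sub]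
      exact dvd_genPoly_sub T
    · omega
end
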